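/- arXiv:1605.01978 — 5 statements merged into one kernel-verified Lean document; each statement's English description precedes it below -/
import Mathlib

section
/- Let G be a simple graph on n vertices with at least one edge, with chromatic number χ(G) and inertia (n⁺, n⁰, n⁻). Then 1 + max(n⁺/n⁻, n⁻/n⁺) ≤ χ(G). (Equivalently, (χ(G) − 1)·n⁻ ≥ n⁺ and (χ(G) − 1)·n⁺ ≥ n⁻.) -/
/-!
Let `A = U diag(μ) Uᵀ` be the adjacency matrix, `q(x) = xᵀ A x`, and colour `G` properly with
`m + 1` colours. There are `m` real weightings `d_s` of the colours (`colorWeight`) which, together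
with the constant weighting `1`, have pairwise orthogonal columns:
`1 + ∑ s, d_s(j) d_s(k) = 0` for `j ≠ k`. Writing `D_s` for the diagonal matrix that multiplies each
vertex by the weight of its colour, properness of the colouring gives
`q(x) + ∑ s, q(D_s x) = 0` for every `x`. This is a real substitute for the usual conjugation
by powers of a diagonal unitary matrix with roots of unity as entries.

If `m n⁺ < n⁻`, the conditions that every `D_s x` be orthogonal to all positive eigenvectors are
`m n⁺` linear equations on the `n⁻`-dimensional span of the negative eigenvectors, so they have a
nonzero solution `x` there. Then `q(x) < 0` and `q(D_s x) ≤ 0` for all `s`, contradicting the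
identity. Hence `n⁻ ≤ m n⁺` (`card_neg_le_mul_card_pos`), and the same argument for `-A` gives
`n⁺ ≤ m n⁻`.
-/

open Matrix

/-- The adjacency matrix of a simple graph, viewed over `ℝ`, is Hermitian. -/
lemma SimpleGraph.adjMatrix_isHermitian {n : ℕ} (G : SimpleGraph (Fin n))
    [DecidableRel G.Adj] : (G.adjMatrix ℝ).IsHermitian := by
  rw [Matrix.IsHermitian, conjTranspose_eq_transpose_of_trivial]
  exact G.isSymm_adjMatrix

/-- `n⁺(G)`: the number of positive eigenvalues (with multiplicity) of the adjacency
matrix of `G`. -/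
noncomputable def SimpleGraph.posInertia {n : ℕ} (G : SimpleGraph (Fin n)) : ℕ :=
  letI := Classical.decRel G.Adj
  (Finset.univ.filter fun i => 0 < G.adjMatrix_isHermitian.eigenvalues i).card

/-- `n⁰(G)`: the number of zero eigenvalues (with multiplicity) of the adjacency
matrix of `G`. -/
noncomputable def SimpleGraph.zeroInertia {n : ℕ} (G : SimpleGraph (Fin n)) : ℕ :=
  letI := Classical.decRel G.Adj
  (Finset.univ.filter fun i => G.adjMatrix_isHermitian.eigenvalues i = 0).card

/-- `n⁻(G)`: the number of negative eigenvalues (with multiplicity) of the adjacency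
matrix of `G`. -/
noncomputable def SimpleGraph.negInertia {n : ℕ} (G : SimpleGraph (Fin n)) : ℕ :=
  letI := Classical.decRel G.Adj
  (Finset.univ.filter fun i => G.adjMatrix_isHermitian.eigenvalues i < 0).card

/-- Row `s` of the real `(m + 1) × (m + 1)` matrix with orthogonal columns whose remaining row is
constantly `1`: up to scaling by `√(m + 1)` and a choice of signs, a Householder reflection. -/
noncomputable def colorWeight (m : ℕ) (s : Fin m) : Fin (m + 1) → ℝ :=
  Fin.cons (-1) fun j => -1 / (1 + √(m + 1)) + if s = j then √(m + 1) else 0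

lemma one_add_sum_colorWeight (m : ℕ) {j k : Fin (m + 1)} (h : j ≠ k) :
    1 + ∑ s, colorWeight m s j * colorWeight m s k = 0 := by
  have hr : √((m : ℝ) + 1) ^ 2 = m + 1 := Real.sq_sqrt (by positivity)
  have hr0 : 0 ≤ √((m : ℝ) + 1) := Real.sqrt_nonneg _
  have hm : (m : ℝ) = √((m : ℝ) + 1) ^ 2 - 1 := by linarith
  unfold colorWeight
  generalize √((m : ℝ) + 1) = r at *
  have hne : 1 + r ≠ 0 := by positivity
  cases j using Fin.cases with
  | zero =>
    cases k using Fin.cases with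
    | zero => exact absurd rfl h
    | succ k =>
      simp only [Fin.cons_zero, Fin.cons_succ, mul_add, Finset.sum_add_distrib, mul_ite, mul_zero,
        Finset.sum_ite_eq', Finset.mem_univ, if_true, Finset.sum_const, Finset.card_univ,
        Fintype.card_fin, nsmul_eq_mul]
      rw [hm]
      field_simp
      ring
  | succ j =>
    cases k using Fin.cases with
    | zero =>
      simp only [Fin.cons_zero, Fin.cons_succ, add_mul, Finset.sum_add_distrib, ite_mul, zero_mul,
        Finset.sum_ite_eq', Finset.mem_univ, if_true, Finset.sum_const, Finset.card_univ,
        Fintype.card_fin, nsmul_eq_mul]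
      rw [hm]
      field_simp
      ring
    | succ k =>
      have hjk : j ≠ k := fun e => h (by rw [e])
      simp only [Fin.cons_succ, add_mul, mul_add, Finset.sum_add_distrib, ite_mul, zero_mul,
        mul_ite, mul_zero, Finset.sum_ite_eq', Finset.mem_univ, if_true, Finset.sum_const,
        Finset.card_univ, Fintype.card_fin, nsmul_eq_mul, if_neg hjk.symm]
      rw [hm]
      field_simp
      ring

/-- The quadratic form of a matrix supported on pairs of differently coloured indices sums to zero
over the rescalings of a vector by `1` and by the `colorWeight`s. -/
lemma quadForm_add_sum_colorWeight {n m : ℕ} (A : Matrix (Fin n) (Fin n) ℝ)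
    (c : Fin n → Fin (m + 1)) (hc : ∀ v w, A v w ≠ 0 → c v ≠ c w) (x : Fin n → ℝ) :
    x ⬝ᵥ A *ᵥ x + ∑ s, (fun v => colorWeight m s (c v) * x v) ⬝ᵥ
      A *ᵥ (fun v => colorWeight m s (c v) * x v) = 0 := by
  have key : ∀ v w, x v * (A v w * x w) +
      ∑ s, colorWeight m s (c v) * x v * (A v w * (colorWeight m s (c w) * x w)) = 0 := by
    intro v w
    by_cases h : A v w = 0
    · simp [h]
    · have h1 := one_add_sum_colorWeight m (hc v w h)
      calc _ = x v * A v w * x w *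
            (1 + ∑ s, colorWeight m s (c v) * colorWeight m s (c w)) := by
            rw [mul_add, Finset.mul_sum]
            congr 1
            · ring
            · exact Finset.sum_congr rfl fun s _ => by ring
        _ = 0 := by rw [h1, mul_zero]
  simp only [dotProduct, mulVec, Finset.mul_sum]
  rw [Finset.sum_comm (s := (Finset.univ : Finset (Fin m))), ← Finset.sum_add_distrib]
  refine Finset.sum_eq_zero fun v _ => ?_
  rw [Finset.sum_comm (s := (Finset.univ : Finset (Fin m))), ← Finset.sum_add_distrib]
  exact Finset.sum_eq_zero fun w _ => key v w

lemma card_neg_le_mul_card_pos {n m : ℕ} (A U : Matrix (Fin n) (Fin n) ℝ) (μ : Fin n → ℝ)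
    (hU : Uᵀ * U = 1) (hA : A = U * diagonal μ * Uᵀ)
    (c : Fin n → Fin (m + 1)) (hc : ∀ v w, A v w ≠ 0 → c v ≠ c w) :
    (Finset.univ.filter fun i => μ i < 0).card ≤
      m * (Finset.univ.filter fun i => 0 < μ i).card := by
  have hq : ∀ x : Fin n → ℝ, x ⬝ᵥ A *ᵥ x = ∑ i, μ i * (Uᵀ *ᵥ x) i ^ 2 := by
    intro x
    rw [hA, ← mulVec_mulVec, ← mulVec_mulVec, dotProduct_mulVec, ← mulVec_transpose]
    simp only [dotProduct, mulVec_diagonal]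
    exact Finset.sum_congr rfl fun i _ => by ring
  by_contra! hlt
  -- `M` sends coordinates along the negative eigenvectors to the components of all the rescaled
  -- vectors along the positive eigenvectors.
  let ext : Matrix (Fin n) {i // μ i < 0} ℝ := Matrix.of fun i j => if i = j then 1 else 0
  let M : Matrix (Fin m × {i // 0 < μ i}) {i // μ i < 0} ℝ := Matrix.of fun p j =>
    (Uᵀ * diagonal (fun v => colorWeight m p.1 (c v)) * (U * ext)) p.2 j
  have hker : LinearMap.ker M.mulVecLin ≠ ⊥ := by
    apply LinearMap.ker_ne_bot_of_finrank_lt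
    simpa [Fintype.card_subtype] using hlt
  obtain ⟨y, hy, hy0⟩ := (Submodule.ne_bot_iff _).1 hker
  have hext : ∀ i, (ext *ᵥ y) i = if h : μ i < 0 then y ⟨i, h⟩ else 0 := by
    intro i
    simp only [ext, mulVec, dotProduct, Matrix.of_apply, ite_mul, one_mul, zero_mul]
    split_ifs with h
    · rw [Finset.sum_eq_single ⟨i, h⟩]
      · simp
      · intro b _ hb
        rw [if_neg]
        rintro rfl
        exact hb rfl
      · simp
    · refine Finset.sum_eq_zero fun b _ => if_neg ?_
      rintro rfl
      exact h b.2
  set x := U *ᵥ (ext *ᵥ y) with hx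
  have hUx : Uᵀ *ᵥ x = ext *ᵥ y := by rw [hx, mulVec_mulVec, hU, one_mulVec]
  have hneg : x ⬝ᵥ A *ᵥ x < 0 := by
    obtain ⟨j, hj⟩ := Function.ne_iff.1 hy0
    rw [hq, hUx]
    refine Finset.sum_neg' (fun i _ => ?_) ⟨j, Finset.mem_univ _, ?_⟩
    · rw [hext]
      split_ifs with h
      · exact mul_nonpos_of_nonpos_of_nonneg h.le (sq_nonneg _)
      · simp
    · rw [hext, dif_pos j.2]
      exact mul_neg_of_neg_of_pos j.2 (sq_pos_of_ne_zero hj)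
  have hnonpos : ∀ s, (fun v => colorWeight m s (c v) * x v) ⬝ᵥ
      A *ᵥ (fun v => colorWeight m s (c v) * x v) ≤ 0 := by
    intro s
    rw [hq]
    refine Finset.sum_nonpos fun i _ => ?_
    rcases le_or_gt (μ i) 0 with h | h
    · exact mul_nonpos_of_nonpos_of_nonneg h (sq_nonneg _)
    · have h1 : (Uᵀ *ᵥ (fun v => colorWeight m s (c v) * x v)) i = 0 := by
        have h2 := congrFun (LinearMap.mem_ker.1 hy) (s, ⟨i, h⟩)
        have h3 : (fun v => colorWeight m s (c v) * x v) =
            diagonal (fun v => colorWeight m s (c v)) *ᵥ x := by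
          funext v
          rw [mulVec_diagonal]
        rw [h3, hx, mulVec_mulVec, mulVec_mulVec, mulVec_mulVec, Matrix.mul_assoc _ U ext]
        exact h2
      rw [h1]
      simp
  have := quadForm_add_sum_colorWeight A c hc x
  have := Finset.sum_nonpos fun s (_ : s ∈ Finset.univ) => hnonpos s
  linarith

theorem inertial_chromatic_bound {n : ℕ} (G : SimpleGraph (Fin n))
    (hE : ∃ v w, G.Adj v w) :
    1 + max ((G.posInertia : ℝ) / (G.negInertia : ℝ))
        ((G.negInertia : ℝ) / (G.posInertia : ℝ)) ≤ (G.chromaticNumber.toNat : ℝ) := by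
  let := Classical.decRel G.Adj
  have hcol : G.Colorable G.chromaticNumber.toNat :=
    SimpleGraph.colorable_chromaticNumber_of_fintype G
  obtain ⟨v₀, -, -⟩ := hE
  generalize G.chromaticNumber.toNat = k at *
  obtain ⟨C⟩ := hcol
  obtain _ | m := k
  · exact (C v₀).elim0
  have hH := G.adjMatrix_isHermitian
  let U : Matrix (Fin n) (Fin n) ℝ := hH.eigenvectorUnitary
  have hU : Uᵀ * U = 1 := by
    have := Unitary.coe_star_mul_self hH.eigenvectorUnitary
    rwa [star_eq_conjTranspose, conjTranspose_eq_transpose_of_trivial] at this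
  have hA : G.adjMatrix ℝ = U * diagonal hH.eigenvalues * Uᵀ := by
    have := hH.spectral_theorem
    rw [Unitary.conjStarAlgAut_apply, star_eq_conjTranspose,
      conjTranspose_eq_transpose_of_trivial] at this
    exact this
  have hc : ∀ v w, G.adjMatrix ℝ v w ≠ 0 → C v ≠ C w := by
    intro v w h
    refine C.valid ?_
    by_contra h'
    exact h (by simp [SimpleGraph.adjMatrix_apply, h'])
  have h1 : G.negInertia ≤ m * G.posInertia := card_neg_le_mul_card_pos _ U _ hU hA C hc
  have h2 : G.posInertia ≤ m * G.negInertia := by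
    have := card_neg_le_mul_card_pos (-G.adjMatrix ℝ) U (fun i => -hH.eigenvalues i) hU
      (by
        rw [← diagonal_neg, Matrix.mul_neg, Matrix.neg_mul, ← hA]) C
      (fun v w h => hc v w (by simpa using h))
    simp only [neg_lt_zero, neg_pos] at this
    unfold SimpleGraph.posInertia SimpleGraph.negInertia
    convert this
  have h1' : (G.negInertia : ℝ) ≤ m * G.posInertia := by exact_mod_cast h1
  have h2' : (G.posInertia : ℝ) ≤ m * G.negInertia := by exact_mod_cast h2
  push_cast
  rw [add_comm]
  gcongr
  exact max_le (div_le_of_le_mul₀ (by positivity) (by positivity) h2')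
    (div_le_of_le_mul₀ (by positivity) (by positivity) h1')
end

section
/- Let G be a simple graph on n ≥ 1 vertices with chromatic number χ(G) and inertia (n⁺, n⁰, n⁻). Then max(n⁺, n⁻) ≤ n(χ(G) − 1)/χ(G), i.e., χ(G)·max(n⁺, n⁻) ≤ n·(χ(G) − 1). -/
/-!
A set of pairwise non-adjacent vertices spans a coordinate subspace on which the quadratic form
`x ↦ xᵀ A x` of the adjacency matrix vanishes identically. Such a subspace meets the span of the
eigenvectors with positive eigenvalue (on which the form is positive definite) only in `0`, so
`n⁺ + |S| ≤ n` for every independent set `S`, and likewise `n⁻ + |S| ≤ n`: this is Cvetković's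
inertia bound, `Matrix.IsHermitian.card_pos_add_card_le`. Summing it over the `χ` colour classes of
an optimal colouring, which partition the `n` vertices, gives `χ · n^± + n ≤ χ · n`.
-/

open Matrix

/-- The quadratic form of a real symmetric matrix in the coordinates of an eigenvector basis. -/
lemma Matrix.IsHermitian.dotProduct_mulVec_eq_sum {n : ℕ} {A : Matrix (Fin n) (Fin n) ℝ}
    (hA : A.IsHermitian) (y : Fin n → ℝ) :
    y ⬝ᵥ (A *ᵥ y) = ∑ i, hA.eigenvalues i *
      ((star (hA.eigenvectorUnitary : Matrix (Fin n) (Fin n) ℝ)) *ᵥ y) i ^ 2 := by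
  conv_lhs => rw [hA.spectral_theorem, Unitary.conjStarAlgAut_apply]
  rw [← mulVec_mulVec, ← mulVec_mulVec, dotProduct_mulVec, ← mulVec_transpose]
  simp only [dotProduct, mulVec_diagonal, star_eq_conjTranspose,
    conjTranspose_eq_transpose_of_trivial, Function.comp_apply, RCLike.ofReal_real_eq_id, id]
  exact Finset.sum_congr rfl fun i _ => by ring

/-- Inertia bound: `S` indexes a principal zero block of `A`, and `s = 1` or `s = -1` selects the
positive or the negative eigenvalues. -/
lemma Matrix.IsHermitian.card_pos_add_card_le {n : ℕ} {A : Matrix (Fin n) (Fin n) ℝ}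
    (hA : A.IsHermitian) (s : ℝ) (S : Finset (Fin n))
    (hS : ∀ i ∈ S, ∀ j ∈ S, A i j = 0) :
    (Finset.univ.filter fun i => 0 < s * hA.eigenvalues i).card + S.card ≤ n := by
  classical
  set V : Matrix (Fin n) (Fin n) ℝ :=
    star (hA.eigenvectorUnitary : Matrix (Fin n) (Fin n) ℝ) with hV
  -- A vector supported on `S` is sent to its coordinates along the remaining eigenvectors.
  let L : (S → ℝ) →ₗ[ℝ] ({i // ¬ 0 < s * hA.eigenvalues i} → ℝ) :=
    LinearMap.funLeft ℝ ℝ Subtype.val ∘ₗ V.mulVecLin ∘ₗ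
      Function.ExtendByZero.linearMap ℝ (Subtype.val : S → Fin n)
  have hL : Function.Injective L := by
    rw [← LinearMap.ker_eq_bot, LinearMap.ker_eq_bot']
    intro x hx
    set y : Fin n → ℝ := Function.extend (Subtype.val : S → Fin n) x 0 with hy
    have hyS : ∀ i, i ∉ S → y i = 0 := fun i hi => by
      rw [hy, Function.extend_apply']
      · rfl
      · rintro ⟨a, rfl⟩
        exact hi a.2
    have hc : ∀ i, ¬ 0 < s * hA.eigenvalues i → (V *ᵥ y) i = 0 := fun i hi =>
      congrFun hx ⟨i, hi⟩
    have hq : y ⬝ᵥ (A *ᵥ y) = 0 := by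
      simp only [dotProduct, mulVec, Finset.mul_sum]
      refine Finset.sum_eq_zero fun i _ => Finset.sum_eq_zero fun j _ => ?_
      by_cases hi : i ∈ S
      · by_cases hj : j ∈ S
        · simp [hS i hi j hj]
        · simp [hyS j hj]
      · simp [hyS i hi]
    have hsum : ∑ i, s * hA.eigenvalues i * (V *ᵥ y) i ^ 2 = 0 := by
      rw [hA.dotProduct_mulVec_eq_sum] at hq
      simp only [mul_assoc, ← Finset.mul_sum]
      rw [hV, hq, mul_zero]
    have hnonneg : ∀ i ∈ Finset.univ, 0 ≤ s * hA.eigenvalues i * (V *ᵥ y) i ^ 2 := by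
      intro i _
      by_cases hi : 0 < s * hA.eigenvalues i
      · positivity
      · simp [hc i hi]
    have hVy : V *ᵥ y = 0 := by
      funext i
      by_cases hi : 0 < s * hA.eigenvalues i
      · have h0 := (Finset.sum_eq_zero_iff_of_nonneg hnonneg).1 hsum i (Finset.mem_univ i)
        exact pow_eq_zero_iff two_ne_zero |>.1 ((mul_eq_zero.1 h0).resolve_left hi.ne')
      · exact hc i hi
    have hy0 : y = 0 := by
      have h1 : (hA.eigenvectorUnitary : Matrix (Fin n) (Fin n) ℝ) * V = 1 :=
        Unitary.coe_mul_star_self _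
      rw [← one_mulVec y, ← h1, ← mulVec_mulVec, hVy, mulVec_zero]
    funext a
    have h2 : y a = x a := Subtype.val_injective.extend_apply x 0 a
    rw [← h2, hy0]
    rfl
  have hdim := LinearMap.finrank_le_finrank_of_injective hL
  rw [Module.finrank_fintype_fun_eq_card, Module.finrank_fintype_fun_eq_card, Fintype.card_coe,
    Fintype.card_subtype] at hdim
  have hsplit := Finset.card_filter_add_card_filter_not (s := (Finset.univ : Finset (Fin n)))
    (fun i => 0 < s * hA.eigenvalues i)
  rw [Finset.card_univ, Fintype.card_fin] at hsplit
  omega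

/-- A number that satisfies the inertia bound for every colour class satisfies the chromatic
bound. -/
lemma SimpleGraph.Coloring.mul_le_of_card_class_le {n k p : ℕ} {G : SimpleGraph (Fin n)}
    (C : G.Coloring (Fin k))
    (h : ∀ c, p + (Finset.univ.filter fun v => C v = c).card ≤ n) :
    k * p ≤ n * (k - 1) := by
  have hsum := Finset.sum_le_sum fun c (_ : c ∈ (Finset.univ : Finset (Fin k))) => h c
  rw [Finset.sum_add_distrib,
    ← Finset.card_eq_sum_card_fiberwise (fun v _ => Finset.mem_univ (C v))] at hsum
  simp only [Finset.sum_const, Finset.card_univ, Fintype.card_fin, smul_eq_mul] at hsum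
  rw [Nat.mul_sub, mul_one, mul_comm n k]
  omega

/-- **Corollary.** For a graph `G` on `n ≥ 1` vertices with chromatic number `χ` and inertia
`(n⁺, n⁰, n⁻)`, we have `χ · max(n⁺, n⁻) ≤ n · (χ - 1)`. -/
theorem chromatic_mul_max_inertia_le {n : ℕ} (hn : 1 ≤ n) (G : SimpleGraph (Fin n)) :
    G.chromaticNumber.toNat * max G.posInertia G.negInertia
      ≤ n * (G.chromaticNumber.toNat - 1) := by
  let := Classical.decRel G.Adj
  obtain ⟨C⟩ := G.colorable_chromaticNumber_of_fintype
  have hblock : ∀ c, ∀ i ∈ Finset.univ.filter (fun v => C v = c),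
      ∀ j ∈ Finset.univ.filter (fun v => C v = c), G.adjMatrix ℝ i j = 0 := by
    intro c i hi j hj
    rw [Finset.mem_filter] at hi hj
    rw [SimpleGraph.adjMatrix_apply, if_neg]
    exact fun hadj => C.valid hadj (hi.2.trans hj.2.symm)
  refine C.mul_le_of_card_class_le fun c => ?_
  rcases max_choice G.posInertia G.negInertia with hmax | hmax <;> rw [hmax]
  · simpa [SimpleGraph.posInertia] using
      G.adjMatrix_isHermitian.card_pos_add_card_le 1 _ (hblock c)
  · simpa [SimpleGraph.negInertia] using
      G.adjMatrix_isHermitian.card_pos_add_card_le (-1) _ (hblock c)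
end

section
/- Let G be a simple graph on n vertices with adjacency matrix A = (a_{kℓ}), and let W = (w_{kℓ}) be an n×n Hermitian complex matrix such that w_{kℓ} = 0 whenever a_{kℓ} = 0 (i.e., the support of W is contained in the edge set of G). Let n⁺(W) and n⁻(W) denote the numbers of positive and negative eigenvalues of W counted with multiplicity, and suppose both are nonzero. Then 1 + max(n⁺(W)/n⁻(W), n⁻(W)/n⁺(W)) ≤ χ(G). -/
/-!
Let `f` be a proper colouring with `c = m + 1` colours, `ζ` a primitive `c`-th root of unity and
`U` the diagonal unitary with entries `ζ ^ f k`. Since `W` vanishes between vertices of the same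
colour, `∑_{i < c} ⟨Uⁱ x, W Uⁱ x⟩ = 0` for every vector `x` (`sum_twisted_form_eq_zero`).

If `n⁻(W) > m * n⁺(W)`, a dimension count gives a nonzero `x` in the span of the negative
eigenvectors such that each `Uⁱ x`, `1 ≤ i ≤ m`, is orthogonal to all positive eigenvectors. For this
`x` the term `i = 0` of the sum is negative and the others are nonpositive, a contradiction. Hence
`n⁻(W) ≤ (c - 1) n⁺(W)` (`card_neg_le`); the same applied to `-W` exchanges the two inertia indices.
-/

open Matrix

/-- Phase averaging kills the quadratic form of a matrix that vanishes on every colour class. -/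
lemma sum_twisted_form_eq_zero {n m : ℕ} (W : Matrix (Fin n) (Fin n) ℂ) (f : Fin n → Fin (m + 1))
    (hf : ∀ k l, f k = f l → W k l = 0) {ζ : ℂ} (hζ : IsPrimitiveRoot ζ (m + 1))
    (x : Fin n → ℂ) :
    ∑ i ∈ Finset.range (m + 1),
      star (diagonal (fun k => (ζ ^ (f k : ℕ)) ^ i) *ᵥ x) ⬝ᵥ
        (W *ᵥ (diagonal (fun k => (ζ ^ (f k : ℕ)) ^ i) *ᵥ x)) = 0 := by
  have hterm : ∀ i, star (diagonal (fun k => (ζ ^ (f k : ℕ)) ^ i) *ᵥ x) ⬝ᵥ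
        (W *ᵥ (diagonal (fun k => (ζ ^ (f k : ℕ)) ^ i) *ᵥ x)) =
      ∑ k, ∑ l, (star (x k) * W k l * x l) * (star (ζ ^ (f k : ℕ)) * ζ ^ (f l : ℕ)) ^ i := by
    intro i
    have hd : diagonal (fun k => (ζ ^ (f k : ℕ)) ^ i) *ᵥ x = fun j => (ζ ^ (f j : ℕ)) ^ i * x j :=
      funext fun j => mulVec_diagonal _ _ j
    rw [hd]
    simp only [dotProduct, mulVec, Pi.star_apply, Finset.mul_sum]
    refine Finset.sum_congr rfl fun k _ => Finset.sum_congr rfl fun l _ => ?_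
    rw [star_mul', star_pow, mul_pow]
    ring
  simp_rw [hterm]
  rw [Finset.sum_comm]
  refine Finset.sum_eq_zero fun k _ => ?_
  rw [Finset.sum_comm]
  refine Finset.sum_eq_zero fun l _ => ?_
  rw [← Finset.mul_sum]
  by_cases hkl : f k = f l
  · simp [hf k l hkl]
  have hnorm : star (ζ ^ (f k : ℕ)) * ζ ^ (f k : ℕ) = 1 := by
    have h1 : ‖ζ‖ = 1 := hζ.norm'_eq_one (Nat.succ_ne_zero m)
    rw [Complex.star_def, ← Complex.normSq_eq_conj_mul_self, Complex.normSq_eq_norm_sq, norm_pow, h1]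
    simp
  set w := star (ζ ^ (f k : ℕ)) * ζ ^ (f l : ℕ) with hw
  have hw1 : w ≠ 1 := by
    intro h
    have hk0 : star (ζ ^ (f k : ℕ)) ≠ 0 := left_ne_zero_of_mul_eq_one hnorm
    have := hζ.pow_inj (f k).2 (f l).2 (mul_left_cancel₀ hk0 (hnorm.trans h.symm))
    exact hkl (Fin.ext this)
  have hwc : w ^ (m + 1) = 1 := by
    rw [hw, mul_pow, ← star_pow, ← pow_mul, ← pow_mul, mul_comm, mul_comm (f k : ℕ),
      mul_comm (f l : ℕ), pow_mul, pow_mul, hζ.pow_eq_one]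
    simp
  have hg := geom_sum_mul w (m + 1)
  rw [hwc, sub_self] at hg
  rw [(mul_eq_zero.mp hg).resolve_right (sub_ne_zero.mpr hw1), mul_zero]

lemma form_eq_sum_eigen {n : ℕ} (W V : Matrix (Fin n) (Fin n) ℂ) (d : Fin n → ℝ)
    (hWV : W = V * diagonal (fun j => (d j : ℂ)) * Vᴴ) (u : Fin n → ℂ) :
    star u ⬝ᵥ (W *ᵥ u) = ((∑ j, d j * Complex.normSq ((Vᴴ *ᵥ u) j) : ℝ) : ℂ) := by
  have h : star u ⬝ᵥ (W *ᵥ u)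
      = star (Vᴴ *ᵥ u) ⬝ᵥ (diagonal (fun j => (d j : ℂ)) *ᵥ (Vᴴ *ᵥ u)) := by
    rw [hWV, star_mulVec, conjTranspose_conjTranspose, ← dotProduct_mulVec, mulVec_mulVec,
      mulVec_mulVec, Matrix.mul_assoc]
  rw [h, dotProduct]
  push_cast
  refine Finset.sum_congr rfl fun j _ => ?_
  rw [mulVec_diagonal, Complex.normSq_eq_conj_mul_self, Pi.star_apply]
  simp only [Complex.star_def]
  ring

/-- The inertia inequality `n⁻ ≤ (c - 1) n⁺`, for a matrix given by a unitary diagonalization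
and vanishing on the colour classes of a map to `c = m + 1` colours. -/
lemma card_neg_le {n m : ℕ} (W V : Matrix (Fin n) (Fin n) ℂ) (d : Fin n → ℝ)
    (hV : Vᴴ * V = 1) (hWV : W = V * diagonal (fun j => (d j : ℂ)) * Vᴴ)
    (f : Fin n → Fin (m + 1)) (hf : ∀ k l, f k = f l → W k l = 0) :
    (Finset.univ.filter fun i => d i < 0).card
      ≤ m * (Finset.univ.filter fun i => 0 < d i).card := by
  by_contra! hlt
  obtain ⟨ζ, hζ⟩ : ∃ ζ : ℂ, IsPrimitiveRoot ζ (m + 1) :=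
    ⟨_, Complex.isPrimitiveRoot_exp (m + 1) (Nat.succ_ne_zero m)⟩
  let D : ℕ → Matrix (Fin n) (Fin n) ℂ := fun i => diagonal (fun k => (ζ ^ (f k : ℕ)) ^ i)
  -- The linear conditions on the coordinates `y` of `x = V y` in the eigenbasis.
  let T : (Fin n → ℂ) →ₗ[ℂ] ({j // ¬ d j < 0} ⊕ (Fin m × {j // 0 < d j}) → ℂ) :=
    LinearMap.pi (Sum.elim (fun j => LinearMap.proj j.1)
      (fun q => LinearMap.proj q.2.1 ∘ₗ (Vᴴ * D (q.1 + 1) * V).mulVecLin))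
  have hker : T.ker ≠ ⊥ := by
    apply LinearMap.ker_ne_bot_of_finrank_lt
    simp only [Module.finrank_fintype_fun_eq_card, Fintype.card_sum, Fintype.card_prod,
      Fintype.card_fin, Fintype.card_subtype]
    have := Finset.card_filter_add_card_filter_not (s := (Finset.univ : Finset (Fin n)))
      (fun i => d i < 0)
    rw [Finset.card_univ, Fintype.card_fin] at this
    omega
  obtain ⟨y, hyT, hy0⟩ := (Submodule.ne_bot_iff _).mp hker
  have hyT' := congrFun (LinearMap.mem_ker.mp hyT)
  have hyN : ∀ j, ¬ d j < 0 → y j = 0 := fun j hj => by simpa [T] using hyT' (Sum.inl ⟨j, hj⟩)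
  have hyP : ∀ i < m, ∀ j, 0 < d j → (Vᴴ *ᵥ (D (i + 1) *ᵥ (V *ᵥ y))) j = 0 :=
    fun i hi j hj => by
      have := hyT' (Sum.inr (⟨i, hi⟩, ⟨j, hj⟩))
      simpa [T, mulVec_mulVec, Matrix.mul_assoc] using this
  have hsum := sum_twisted_form_eq_zero W f hf hζ (V *ᵥ y)
  simp_rw [form_eq_sum_eigen W V d hWV] at hsum
  rw [← Complex.ofReal_sum, Complex.ofReal_eq_zero, Finset.sum_range_succ'] at hsum
  have h1 : ∑ i ∈ Finset.range m, ∑ j,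
      d j * Complex.normSq ((Vᴴ *ᵥ (D (i + 1) *ᵥ (V *ᵥ y))) j) ≤ 0 := by
    refine Finset.sum_nonpos fun i hi => Finset.sum_nonpos fun j _ => ?_
    rcases lt_or_ge 0 (d j) with hj | hj
    · rw [hyP i (Finset.mem_range.mp hi) j hj]; simp
    · exact mul_nonpos_of_nonpos_of_nonneg hj (Complex.normSq_nonneg _)
  have hz : Vᴴ *ᵥ (D 0 *ᵥ (V *ᵥ y)) = y := by
    simp [D, mulVec_mulVec, hV]
  have h2 : ∑ j, d j * Complex.normSq ((Vᴴ *ᵥ (D 0 *ᵥ (V *ᵥ y))) j) < 0 := by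
    rw [hz]
    obtain ⟨j, hj⟩ := Function.ne_iff.mp hy0
    have hdj : d j < 0 := by
      by_contra h
      exact hj (hyN j h)
    refine Finset.sum_neg' (fun k _ => ?_) ⟨j, Finset.mem_univ j, ?_⟩
    · by_cases hk : d k < 0
      · exact mul_nonpos_of_nonpos_of_nonneg hk.le (Complex.normSq_nonneg _)
      · simp [hyN k hk]
    · exact mul_neg_of_neg_of_pos hdj (Complex.normSq_pos.mpr hj)
  exact absurd hsum (add_neg_of_nonpos_of_neg h1 h2).ne

/-- **Corollary.** Let `G` be a simple graph on `n` vertices and let `W` be a Hermitian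
complex matrix whose support is contained in the edge set of `G` (i.e. `W k l = 0`
whenever the adjacency matrix entry `a k l = 0`).  If `W` has at least one positive and
at least one negative eigenvalue, then
`1 + max (n⁺(W)/n⁻(W)) (n⁻(W)/n⁺(W)) ≤ χ(G)`, where `n⁺(W)` and `n⁻(W)` are the numbers
of positive and negative eigenvalues of `W` counted with multiplicity. -/
theorem inertial_bound_weighted {n : ℕ} (G : SimpleGraph (Fin n)) [DecidableRel G.Adj]
    (W : Matrix (Fin n) (Fin n) ℂ) (hW : W.IsHermitian)
    (hsupp : ∀ k l, G.adjMatrix ℂ k l = 0 → W k l = 0)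
    (npos : ℕ) (hpos : npos = (Finset.univ.filter fun i => 0 < hW.eigenvalues i).card)
    (nneg : ℕ) (hneg : nneg = (Finset.univ.filter fun i => hW.eigenvalues i < 0).card)
    (hpos0 : npos ≠ 0) (hneg0 : nneg ≠ 0) :
    1 + max ((npos : ℝ) / (nneg : ℝ)) ((nneg : ℝ) / (npos : ℝ))
      ≤ (G.chromaticNumber.toNat : ℝ) := by
  have hcol : G.Colorable G.chromaticNumber.toNat :=
    SimpleGraph.colorable_chromaticNumber G.colorable_of_fintype
  obtain ⟨C⟩ := hcol
  obtain ⟨i₀, -⟩ := Finset.card_ne_zero.mp (hpos ▸ hpos0)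
  obtain ⟨m, hm⟩ : ∃ m, G.chromaticNumber.toNat = m + 1 :=
    Nat.exists_eq_succ_of_ne_zero (Nat.ne_of_gt (Nat.zero_lt_of_lt (C i₀).2))
  rw [hm] at C ⊢
  have hf : ∀ k l, C k = C l → W k l = 0 := fun k l h => hsupp k l <| by
    rw [SimpleGraph.adjMatrix_apply, if_neg fun hadj => C.valid hadj h]
  let V : Matrix (Fin n) (Fin n) ℂ := hW.eigenvectorUnitary
  have hV : Vᴴ * V = 1 := Unitary.coe_star_mul_self hW.eigenvectorUnitary
  have hWV : W = V * diagonal (fun j => (hW.eigenvalues j : ℂ)) * Vᴴ := hW.spectral_theorem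
  have h1 := card_neg_le W V _ hV hWV C hf
  have h2 := card_neg_le (-W) V (fun j => -hW.eigenvalues j) hV
    (by
      have : diagonal (fun j => ((-hW.eigenvalues j : ℝ) : ℂ))
          = -diagonal (fun j => (hW.eigenvalues j : ℂ)) := by
        rw [diagonal_neg]; congr 1; ext j; simp
      rw [this, Matrix.mul_neg, Matrix.neg_mul, ← hWV]) C
    (fun k l h => by simp [hf k l h])
  simp only [Left.neg_neg_iff, Left.neg_pos_iff] at h2
  rw [← hpos, ← hneg] at h1 h2
  have hp : (0 : ℝ) < npos := by exact_mod_cast Nat.pos_of_ne_zero hpos0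
  have hn : (0 : ℝ) < nneg := by exact_mod_cast Nat.pos_of_ne_zero hneg0
  have : max ((npos : ℝ) / (nneg : ℝ)) ((nneg : ℝ) / (npos : ℝ)) ≤ m := by
    rw [max_le_iff, div_le_iff₀ hn, div_le_iff₀ hp]
    exact ⟨by exact_mod_cast h2, by exact_mod_cast h1⟩
  push_cast
  linarith
end

section
/- Let G be a simple graph on n vertices and let Ḡ be its complement. Then n⁺(G) + n⁺(Ḡ) ≤ n + 1. -/
/-!
Write `A`, `B` for the adjacency matrices of `G` and its complement, so that `A + B = J - I` with
`J` the all-ones matrix. If `n⁺(G) + n⁺(Gᶜ) ≥ n + 2`, then there are at most `n - 2` nonpositive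
eigenvalues of `A` and of `B` in total. Requiring a vector to be orthogonal to the corresponding
eigenvectors and to the all-ones vector imposes at most `n - 1` linear conditions, so some `x ≠ 0`
satisfies them all (`LinearMap.ker_ne_bot_of_finrank_lt`). By `quadForm_eq_sum`, both `xᵀAx` and
`xᵀBx` are then nonnegative, whereas `xᵀ(A + B)x = (∑ xᵢ)² - ∑ xᵢ² = -∑ xᵢ² < 0`.
-/

open Matrix

/-- Diagonalization of the quadratic form of a real symmetric matrix: the rows of `U` are the
eigenvectors. -/
lemma quadForm_eq_sum {n : ℕ} {A : Matrix (Fin n) (Fin n) ℝ} (hA : A.IsHermitian) :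
    ∃ U : Matrix (Fin n) (Fin n) ℝ, ∀ x : Fin n → ℝ,
      x ⬝ᵥ (A *ᵥ x) = ∑ i, hA.eigenvalues i * ((U *ᵥ x) i) ^ 2 := by
  refine ⟨(hA.eigenvectorUnitary : Matrix (Fin n) (Fin n) ℝ)ᵀ, fun x => ?_⟩
  have h := hA.spectral_theorem
  rw [Unitary.conjStarAlgAut_apply] at h
  conv_lhs => rw [h]
  rw [← Matrix.mulVec_mulVec, ← Matrix.mulVec_mulVec, Matrix.dotProduct_mulVec,
    ← Matrix.mulVec_transpose, Matrix.star_eq_conjTranspose,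
    conjTranspose_eq_transpose_of_trivial]
  simp only [dotProduct, mulVec_diagonal, Function.comp_apply, RCLike.ofReal_real_eq_id, id]
  exact Finset.sum_congr rfl fun i _ => by ring

/-- The quadratic form of `J - I`, the sum of the adjacency matrices of a graph and its
complement. -/
lemma quadForm_adj_add_compl {n : ℕ} (G : SimpleGraph (Fin n)) [DecidableRel G.Adj]
    [DecidableRel Gᶜ.Adj] (x : Fin n → ℝ) :
    x ⬝ᵥ (G.adjMatrix ℝ *ᵥ x) + x ⬝ᵥ (Gᶜ.adjMatrix ℝ *ᵥ x) = (∑ i, x i) ^ 2 - ∑ i, x i ^ 2 := by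
  have h : G.adjMatrix ℝ + Gᶜ.adjMatrix ℝ = Matrix.of (fun _ _ => 1) - 1 := by
    ext i j
    by_cases hij : i = j
    · subst hij; simp
    · by_cases hG : G.Adj i j <;> simp [hij, hG, SimpleGraph.adjMatrix_apply]
  rw [← dotProduct_add, ← Matrix.add_mulVec, h, Matrix.sub_mulVec, Matrix.one_mulVec,
    dotProduct_sub]
  simp [dotProduct, mulVec, pow_two, Finset.sum_mul]

/-- **Nordhaus–Gaddum for `n⁺`.** For any graph `G` on `n` vertices,
`n⁺(G) + n⁺(Ḡ) ≤ n + 1`. -/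
theorem posInertia_add_compl_le {n : ℕ} (G : SimpleGraph (Fin n)) :
    G.posInertia + Gᶜ.posInertia ≤ n + 1 := by
  classical
  by_contra! hlt
  unfold SimpleGraph.posInertia at hlt
  letI := Classical.decRel G.Adj
  letI := Classical.decRel Gᶜ.Adj
  set a := G.adjMatrix_isHermitian.eigenvalues with ha
  set b := Gᶜ.adjMatrix_isHermitian.eigenvalues with hb
  obtain ⟨U, hU⟩ := quadForm_eq_sum G.adjMatrix_isHermitian
  obtain ⟨V, hV⟩ := quadForm_eq_sum Gᶜ.adjMatrix_isHermitian
  let f : (Fin n → ℝ) →ₗ[ℝ] ({i // ¬ 0 < a i} → ℝ) × ({i // ¬ 0 < b i} → ℝ) × ℝ :=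
    ((LinearMap.funLeft ℝ ℝ Subtype.val).comp U.mulVecLin).prod
      (((LinearMap.funLeft ℝ ℝ Subtype.val).comp V.mulVecLin).prod
        (∑ i, LinearMap.proj i))
  have hker : LinearMap.ker f ≠ ⊥ := by
    apply LinearMap.ker_ne_bot_of_finrank_lt
    have h1 := Fintype.card_subtype_compl (fun i => 0 < a i)
    have h2 := Fintype.card_subtype_compl (fun i => 0 < b i)
    have h3 := Fintype.card_subtype_le (fun i => 0 < a i)
    have h4 := Fintype.card_subtype_le (fun i => 0 < b i)
    simp only [Module.finrank_prod, Module.finrank_fintype_fun_eq_card, Module.finrank_self,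
      Fintype.card_fin, h1, h2]
    simp only [Fintype.card_fin] at h3 h4
    rw [← Fintype.card_subtype, ← Fintype.card_subtype] at hlt
    omega
  obtain ⟨x, hx, hx0⟩ := (Submodule.ne_bot_iff _).1 hker
  rw [LinearMap.mem_ker] at hx
  have hxa : ∀ i, ¬ 0 < a i → (U *ᵥ x) i = 0 := fun i hi =>
    congrFun (congrArg Prod.fst hx) ⟨i, hi⟩
  have hxb : ∀ i, ¬ 0 < b i → (V *ᵥ x) i = 0 := fun i hi =>
    congrFun (congrArg (fun p => p.2.1) hx) ⟨i, hi⟩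
  have hxs : ∑ i, x i = 0 := by
    have := congrArg (fun p => p.2.2) hx
    simpa [f] using this
  have hA : 0 ≤ ∑ i, a i * ((U *ᵥ x) i) ^ 2 := Finset.sum_nonneg fun i _ => by
    by_cases hi : 0 < a i
    · positivity
    · simp [hxa i hi]
  have hB : 0 ≤ ∑ i, b i * ((V *ᵥ x) i) ^ 2 := Finset.sum_nonneg fun i _ => by
    by_cases hi : 0 < b i
    · positivity
    · simp [hxb i hi]
  have hsum := quadForm_adj_add_compl G x
  rw [hU, hV, hxs] at hsum
  obtain ⟨j, hj⟩ := Function.ne_iff.1 hx0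
  have hpos : 0 < ∑ i, x i ^ 2 :=
    Finset.sum_pos' (fun i _ => sq_nonneg _) ⟨j, Finset.mem_univ _, by
      have : x j ≠ 0 := hj
      positivity⟩
  linarith
end

section
/- Let G be a simple graph on n vertices and let Ḡ be its complement. Then n⁻(G) + n⁻(Ḡ) ≥ n − 1. -/
/-!
The adjacency matrices satisfy `A(G) + A(Ḡ) = J - I`, where `J` is the all-ones matrix. If `x` is
orthogonal to all eigenvectors of `A(G)` and of `A(Ḡ)` with negative eigenvalue and to the all-ones
vector, then `xᵀ A(G) x ≥ 0` and `xᵀ A(Ḡ) x ≥ 0`, while their sum is `(∑ xᵢ)² - ‖x‖² = -‖x‖²`;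
hence `x = 0`. So these `n⁻(G) + n⁻(Ḡ) + 1` linear conditions on `ℝⁿ` have only the trivial common
solution, which forces `n ≤ n⁻(G) + n⁻(Ḡ) + 1`.
-/

open Matrix

/-- The quadratic form of a real symmetric matrix is nonnegative on a subspace cut out by as many
linear conditions as there are negative eigenvalues. -/
lemma exists_linearMap_quadForm_nonneg {n : ℕ} {A : Matrix (Fin n) (Fin n) ℝ}
    (hA : A.IsHermitian) :
    ∃ L : (Fin n → ℝ) →ₗ[ℝ] ({i // hA.eigenvalues i < 0} → ℝ),
      ∀ x, L x = 0 → 0 ≤ x ⬝ᵥ A *ᵥ x := by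
  set U : Matrix (Fin n) (Fin n) ℝ := (hA.eigenvectorUnitary : Matrix (Fin n) (Fin n) ℝ)
  -- `Uᵀ x` lists the coordinates of `x` in the eigenbasis; `L` keeps those of negative eigenvalue.
  refine ⟨(LinearMap.funLeft ℝ ℝ Subtype.val).comp (Matrix.mulVecLin Uᵀ), fun x hx => ?_⟩
  have hspec : A = U * diagonal hA.eigenvalues * Uᵀ := by
    have h := hA.spectral_theorem
    rw [Unitary.conjStarAlgAut_apply] at h
    simpa [U, star_eq_conjTranspose, Function.comp_def] using h
  have hquad : x ⬝ᵥ A *ᵥ x = ∑ i, hA.eigenvalues i * (Uᵀ *ᵥ x) i ^ 2 := by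
    have h1 : x ⬝ᵥ A *ᵥ x = (Uᵀ *ᵥ x) ⬝ᵥ (diagonal hA.eigenvalues *ᵥ (Uᵀ *ᵥ x)) := by
      conv_lhs => rw [hspec]
      rw [← mulVec_mulVec, ← mulVec_mulVec, dotProduct_mulVec, mulVec_transpose]
    rw [h1, dotProduct]
    refine Finset.sum_congr rfl fun i _ => ?_
    rw [mulVec_diagonal]
    ring
  rw [hquad]
  refine Finset.sum_nonneg fun i _ => ?_
  by_cases hi : hA.eigenvalues i < 0
  · have h0 : (Uᵀ *ᵥ x) i = 0 := congrFun hx ⟨i, hi⟩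
    simp [h0]
  · exact mul_nonneg (not_lt.mp hi) (sq_nonneg _)

/-- The quadratic form of `A(G) + A(Ḡ) = J - I`. -/
lemma quadForm_add_compl {n : ℕ} (G : SimpleGraph (Fin n)) [DecidableRel G.Adj]
    [DecidableRel Gᶜ.Adj] (x : Fin n → ℝ) :
    x ⬝ᵥ G.adjMatrix ℝ *ᵥ x + x ⬝ᵥ Gᶜ.adjMatrix ℝ *ᵥ x = (∑ i, x i) ^ 2 - x ⬝ᵥ x := by
  have h : G.adjMatrix ℝ + Gᶜ.adjMatrix ℝ = Matrix.of (fun _ _ => (1 : ℝ)) - 1 := by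
    ext i j
    by_cases hij : i = j
    · simp [hij]
    · by_cases ha : G.Adj i j <;> simp [SimpleGraph.adjMatrix_apply, hij, ha]
  have hJ : x ⬝ᵥ (Matrix.of (fun _ _ => (1 : ℝ))) *ᵥ x = (∑ i, x i) ^ 2 := by
    simp [dotProduct, mulVec, ← Finset.sum_mul, sq]
  rw [← dotProduct_add, ← add_mulVec, h, sub_mulVec, dotProduct_sub, hJ, one_mulVec]

/-- **Nordhaus–Gaddum for `n⁻`.** For any graph `G` on `n` vertices,
`n⁻(G) + n⁻(Ḡ) ≥ n - 1`. -/
theorem negInertia_add_compl_ge {n : ℕ} (G : SimpleGraph (Fin n)) :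
    n - 1 ≤ G.negInertia + Gᶜ.negInertia := by
  classical
  let _ := Classical.decRel G.Adj
  let _ := Classical.decRel Gᶜ.Adj
  obtain ⟨L, hL⟩ := exists_linearMap_quadForm_nonneg G.adjMatrix_isHermitian
  obtain ⟨M, hM⟩ := exists_linearMap_quadForm_nonneg Gᶜ.adjMatrix_isHermitian
  let S : (Fin n → ℝ) →ₗ[ℝ] ℝ := ∑ i, LinearMap.proj i
  have hS : ∀ x, S x = ∑ i, x i := fun x => by simp [S]
  have hinj : Function.Injective (L.prod (M.prod S)) := by
    rw [injective_iff_map_eq_zero]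
    intro x hx
    have h1 : L x = 0 := congrArg Prod.fst hx
    have h2 : M x = 0 := congrArg (fun p => p.2.1) hx
    have h3 : S x = 0 := congrArg (fun p => p.2.2) hx
    have hq := quadForm_add_compl G x
    rw [← hS, h3] at hq
    have hLx := hL x h1
    have hMx := hM x h2
    have hxx : 0 ≤ x ⬝ᵥ x := Finset.sum_nonneg fun i _ => mul_self_nonneg (x i)
    exact dotProduct_self_eq_zero.mp (by linarith)
  have hdim := LinearMap.finrank_le_finrank_of_injective hinj
  simp only [Module.finrank_prod, Module.finrank_fintype_fun_eq_card, Fintype.card_fin,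
    Module.finrank_self, Fintype.card_subtype] at hdim
  have hG : G.negInertia =
      (Finset.univ.filter fun i => G.adjMatrix_isHermitian.eigenvalues i < 0).card := by
    unfold SimpleGraph.negInertia
    congr!
  have hGc : Gᶜ.negInertia =
      (Finset.univ.filter fun i => Gᶜ.adjMatrix_isHermitian.eigenvalues i < 0).card := by
    unfold SimpleGraph.negInertia
    congr!
  omega
end
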